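/- arXiv:2305.09796 — 2 statements merged into one kernel-verified Lean document; each statement's English description precedes it below -/
import Mathlib

section
/- Let (D,V) be a Dyer system, let g ∈ D, and let (x_1^{a_1}, x_2^{a_2}, …, x_l^{a_l}) be a reduced syllabic representative for g, i.e., g = x_1^{a_1}x_2^{a_2}⋯x_l^{a_l} with x_i ∈ V, a_i ∈ ℤ, and l = l_sy(g). Then l_V(g) = ‖a_1‖_{o(x_1)} + ‖a_2‖_{o(x_2)} + ⋯ + ‖a_l‖_{o(x_l)}, where o(x) denotes the order of x in D and, for n ∈ ℕ_{≥2} ∪ {∞}, ‖a‖_n denotes the word length of the image of a in the cyclic group of order n with respect to the generating set {1}. -/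
/-!
Every syllabic word `x₁^{a₁} ⋯ x_l^{a_l}` crosses the "walls" `tᵢ = uᵢ xᵢ uᵢ⁻¹`, where
`uᵢ = x₁^{a₁} ⋯ x_{i-1}^{a_{i-1}}`, each with multiplicity `aᵢ`. For fixed `n` (with `n = 0` standing
for `f = ∞`), the function `N(t) = ∑ aᵢ` (sum over the `i` with `tᵢ = t` and `f xᵢ = n`), taken in
`ℤ/n`, depends only on the element of the Dyer group `D` represented by the word. Indeed it is
a cocycle: `D` acts on `D → ℤ/n` by affine maps whose linear part is conjugation of the argument and
for which the generator `x` translates by the indicator of `x` (when `f x = n`), and `N` is the image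
of `0`. Checking the defining relations is the only place where the presentation enters; the braid
relation holds because both sides cross the same reflections of a dihedral group
(`braid_affine`).

If `tᵢ = tⱼ` with `i < j`, the syllable `xⱼ^{aⱼ}` can be moved left and merged with `xᵢ^{aᵢ}`, so the
walls of a reduced syllabic word are pairwise distinct (`exists_shorter`). Hence `aᵢ` modulo `f xᵢ`
is read off from `N` at the wall `tᵢ`. A word of length `k` in the letters `x^{±1}` for the same
element must therefore cross the wall `tᵢ` at least `‖aᵢ‖` times, for each `i`, so `∑ ‖aᵢ‖ ≤ k`
(`sum_cyclicNorm_le_length`). The same cocycle shows that `x` has order `f x`.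
-/

open scoped Classical

/-- The word length of `g` with respect to the alphabet `S ∪ S⁻¹`. -/
noncomputable def wordLength {G : Type*} [Group G] (S : Set G) (g : G) : ℕ :=
  sInf {n | ∃ w : List G, w.length = n ∧ (∀ a ∈ w, a ∈ S ∪ S⁻¹) ∧ w.prod = g}

/-- The syllable length of `g` with respect to `S`. -/
noncomputable def sylLength {G : Type*} [Group G] (S : Set G) (g : G) : ℕ :=
  sInf {n | ∃ w : List (G × ℤ), w.length = n ∧ (∀ p ∈ w, p.1 ∈ S) ∧
    (w.map fun p => p.1 ^ p.2).prod = g}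

/-- The growth series of a subset `A` of a group `G` with respect to a generating set `S`:
the coefficient of `t^n` is the number of elements of `A` of word length `n`. -/
noncomputable def growthSeries {G : Type*} [Group G] (S : Set G) (A : Set G) :
    PowerSeries ℤ :=
  PowerSeries.mk fun n => (Set.ncard {g ∈ A | wordLength S g = n} : ℤ)

/-- A Dyer graph. -/
structure DyerGraph (V : Type*) where
  Adj : V → V → Prop
  symm : ∀ {x y}, Adj x y → Adj y x
  loopless : ∀ x, ¬ Adj x x
  m : V → V → ℕ
  m_symm : ∀ x y, m x y = m y x
  m_ge : ∀ {x y}, Adj x y → 2 ≤ m x y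
  f : V → ℕ∞
  f_ge : ∀ x, 2 ≤ f x
  compat : ∀ {x y}, Adj x y → m x y ≠ 2 → f x = 2 ∧ f y = 2

namespace DyerGraph

variable {V : Type*} (Γ : DyerGraph V)

/-- The alternating word `π(x, y, n) = xyxy⋯` of length `n` in the free group. -/
def altWord (x y : V) : ℕ → FreeGroup V
  | 0 => 1
  | n + 1 => FreeGroup.of x * altWord y x n

/-- The defining relations of the Dyer group. -/
def rels : Set (FreeGroup V) :=
  {r | ∃ x : V, Γ.f x ≠ ⊤ ∧ r = FreeGroup.of x ^ (Γ.f x).toNat} ∪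
  {r | ∃ x y : V, Γ.Adj x y ∧
      r = altWord x y (Γ.m x y) * (altWord y x (Γ.m x y))⁻¹}

/-- The Dyer group associated to a Dyer graph. -/
abbrev DyerGroup := PresentedGroup Γ.rels

/-- The standard generator of the Dyer group corresponding to a vertex. -/
def gen (x : V) : Γ.DyerGroup := PresentedGroup.of x

/-- The standard parabolic subgroup generated by `X ⊆ V`. -/
def parabolic (X : Set V) : Subgroup Γ.DyerGroup := Subgroup.closure (Γ.gen '' X)

/-- The set of vertices with `f x = 2`. -/
def V2 : Set V := {x | Γ.f x = 2}

/-- The set of vertices with `2 < f x < ∞`. -/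
def Vp : Set V := {x | 2 < Γ.f x ∧ Γ.f x ≠ ⊤}

/-- The set of vertices with `f x = ∞`. -/
def Vinf : Set V := {x | Γ.f x = ⊤}

/-- A Dyer group is of spherical type if the graph is complete and `D_2` is finite. -/
def Spherical : Prop :=
  (∀ x y : V, x ≠ y → Γ.Adj x y) ∧ (Γ.parabolic Γ.V2 : Set Γ.DyerGroup).Finite

/-- The set `A_X` of `X`-minimal elements. -/
def Amin (X : Set V) : Set Γ.DyerGroup :=
  {g | ∀ h ∈ Γ.parabolic X,
    sylLength (Set.range Γ.gen) g ≤ sylLength (Set.range Γ.gen) (g * h)}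

/-- The set `B_X = A_X ∖ ⋃_{X ⊊ Y} A_Y`. -/
def Bmin (X : Set V) : Set Γ.DyerGroup :=
  Γ.Amin X \ ⋃ (Y : Set V) (_ : X ⊂ Y), Γ.Amin Y

end DyerGraph

/-- For `n ∈ ℕ` (with `n = 0` meaning infinite order, since `ZMod 0 = ℤ`), `‖a‖ₙ` is the
word length of the image of `a` in the cyclic group of order `n` with respect to `{1}`. -/
noncomputable def cyclicNorm (n : ℕ) (a : ℤ) : ℕ :=
  wordLength ({Multiplicative.ofAdd (1 : ZMod n)} : Set (Multiplicative (ZMod n)))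
    (Multiplicative.ofAdd (a : ZMod n))

/-! ### The cyclic norm -/

lemma cyclicNorm_le {n : ℕ} {a : ℤ} (L : List ℤ) (hL : ∀ b ∈ L, b = 1 ∨ b = -1)
    (hs : ((L.sum : ℤ) : ZMod n) = a) : cyclicNorm n a ≤ L.length := by
  apply Nat.sInf_le
  refine ⟨L.map fun b => Multiplicative.ofAdd ((b : ℤ) : ZMod n), by simp, ?_, ?_⟩
  · intro c hc
    obtain ⟨b, hb, rfl⟩ := List.mem_map.1 hc
    rcases hL b hb with rfl | rfl
    · left; simp
    · right; simp
  · rw [← hs]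
    clear hs hL
    induction L with
    | nil => simp
    | cons b L ih => simp [ih, ofAdd_add]

lemma exists_list_cyclicNorm (n : ℕ) (a : ℤ) :
    ∃ L : List ℤ, L.length = cyclicNorm n a ∧ (∀ b ∈ L, b = 1 ∨ b = -1) ∧
      ((L.sum : ℤ) : ZMod n) = a := by
  have hne : {k | ∃ w : List (Multiplicative (ZMod n)), w.length = k ∧
      (∀ c ∈ w, c ∈ ({Multiplicative.ofAdd (1 : ZMod n)} : Set (Multiplicative (ZMod n))) ∪
        ({Multiplicative.ofAdd (1 : ZMod n)} : Set (Multiplicative (ZMod n)))⁻¹) ∧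
      w.prod = Multiplicative.ofAdd (a : ZMod n)}.Nonempty := by
    obtain ⟨k, rfl | rfl⟩ := a.eq_nat_or_neg
    · refine ⟨k, List.replicate k (Multiplicative.ofAdd 1), by simp, ?_, ?_⟩
      · intro c hc
        rw [List.eq_of_mem_replicate hc]; left; simp
      · rw [List.prod_replicate, ← ofAdd_nsmul]; simp
    · refine ⟨k, List.replicate k (Multiplicative.ofAdd (-1)), by simp, ?_, ?_⟩
      · intro c hc
        rw [List.eq_of_mem_replicate hc]; right; simp
      · rw [List.prod_replicate, ← ofAdd_nsmul]; simp
  obtain ⟨w, hlen, hmem, hprod⟩ := Nat.sInf_mem hne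
  have key : ∀ w : List (Multiplicative (ZMod n)),
      (∀ c ∈ w, c ∈ ({Multiplicative.ofAdd (1 : ZMod n)} : Set (Multiplicative (ZMod n))) ∪
        ({Multiplicative.ofAdd (1 : ZMod n)} : Set (Multiplicative (ZMod n)))⁻¹) →
      ∃ L : List ℤ, L.length = w.length ∧ (∀ b ∈ L, b = 1 ∨ b = -1) ∧
        Multiplicative.ofAdd ((L.sum : ℤ) : ZMod n) = w.prod := by
    intro w hw
    induction w with
    | nil => exact ⟨[], by simp⟩
    | cons c w ih =>
      obtain ⟨L, h1, h2, h3⟩ := ih fun c hc => hw c (List.mem_cons_of_mem _ hc)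
      rcases hw c List.mem_cons_self with h | h
      · refine ⟨1 :: L, by simp [h1], by simpa using h2, ?_⟩
        simp only [Set.mem_singleton_iff] at h
        simp [h, ← h3, ofAdd_add]
      · refine ⟨-1 :: L, by simp [h1], by simpa using h2, ?_⟩
        simp only [Set.mem_inv, Set.mem_singleton_iff, inv_eq_iff_eq_inv] at h
        simp [h, ← h3, ofAdd_add]
  obtain ⟨L, h1, h2, h3⟩ := key w hmem
  exact ⟨L, h1.trans hlen, h2, Multiplicative.ofAdd.injective (h3.trans hprod)⟩

/-! ### Lists of keyed multiplicities -/

/-- The total multiplicity of the key `k` in a list of keyed multiplicities. -/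
noncomputable def keySum {K : Type*} (L : List (K × ℤ)) (k : K) : ℤ :=
  (L.map fun e => if e.1 = k then e.2 else 0).sum

lemma keySum_eq_zero {K : Type*} {L : List (K × ℤ)} {k : K} (h : k ∉ L.map Prod.fst) :
    keySum L k = 0 := by
  induction L with
  | nil => rfl
  | cons e L ih =>
    simp only [List.map_cons, List.mem_cons, not_or] at h
    have := ih h.2
    simp only [keySum, List.map_cons, List.sum_cons] at this ⊢
    rw [this, if_neg (Ne.symm h.1), add_zero]

lemma keySum_of_nodup {K : Type*} {L : List (K × ℤ)} (hL : (L.map Prod.fst).Nodup)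
    {e : K × ℤ} (he : e ∈ L) : keySum L e.1 = e.2 := by
  induction L with
  | nil => simp at he
  | cons d L ih =>
    simp only [List.map_cons, List.nodup_cons] at hL
    rcases List.mem_cons.1 he with rfl | he
    · have := keySum_eq_zero hL.1
      simp only [keySum, List.map_cons, List.sum_cons] at this ⊢
      simp [this]
    · have hne : d.1 ≠ e.1 := fun h => hL.1 (h ▸ List.mem_map_of_mem he)
      have := ih hL.2 he
      simp only [keySum, List.map_cons, List.sum_cons] at this ⊢
      simp [this, hne]

lemma exists_list_keySum {K : Type*} {L : List (K × ℤ)} (hL : ∀ e ∈ L, e.2 = 1 ∨ e.2 = -1)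
    (k : K) : ∃ M : List ℤ, M.length = (L.map Prod.fst).count k ∧
      (∀ b ∈ M, b = 1 ∨ b = -1) ∧ M.sum = keySum L k := by
  induction L with
  | nil => exact ⟨[], by simp [keySum]⟩
  | cons d L ih =>
    obtain ⟨M, h1, h2, h3⟩ := ih fun e he => hL e (List.mem_cons_of_mem _ he)
    by_cases h : d.1 = k
    · refine ⟨d.2 :: M, by simp [h1, h], ?_, ?_⟩
      · intro b hb
        rcases List.mem_cons.1 hb with rfl | hb
        · exact hL d List.mem_cons_self
        · exact h2 b hb
      · simp only [List.sum_cons, h3]; simp [keySum, h]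
    · refine ⟨M, by simp [h1, h], h2, ?_⟩
      simp only [h3]; simp [keySum, h]

lemma sum_count_le_length {K : Type*} {l l' : List K} (hl : l.Nodup) :
    (l.map fun k => l'.count k).sum ≤ l'.length := by
  have h1 : (l.map fun k => l'.count k).sum = ∑ k ∈ l.toFinset, l'.count k := by
    rw [List.sum_toFinset _ hl]
  rw [h1]
  calc ∑ k ∈ l.toFinset, l'.count k ≤ ∑ k ∈ l.toFinset ∪ l'.toFinset, l'.count k :=
        Finset.sum_le_sum_of_subset Finset.subset_union_left
    _ = l'.length := by
        have := Multiset.sum_count_eq_card (s := l.toFinset ∪ l'.toFinset) (m := (l' : Multiset K))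
          (by intro a ha; simp only [Multiset.mem_coe] at ha; simp [ha])
        simpa using this

/-- If two lists assign the same multiplicities modulo `ν k` to each key `k`, the first has distinct
keys and the second only multiplicities `±1`, then the cyclic norm of the first is at most the length
of the second. -/
lemma sum_cyclicNorm_le_length {K : Type*} (ν : K → ℕ) {L L' : List (K × ℤ)}
    (hL : (L.map Prod.fst).Nodup) (hL' : ∀ e ∈ L', e.2 = 1 ∨ e.2 = -1)
    (h : ∀ k, (keySum L k : ZMod (ν k)) = keySum L' k) :
    (L.map fun e => cyclicNorm (ν e.1) e.2).sum ≤ L'.length := by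
  calc (L.map fun e => cyclicNorm (ν e.1) e.2).sum
      ≤ (L.map fun e => (L'.map Prod.fst).count e.1).sum := by
        apply List.sum_le_sum
        intro e he
        obtain ⟨M, h1, h2, h3⟩ := exists_list_keySum hL' e.1
        rw [← h1]
        apply cyclicNorm_le M h2
        rw [h3, ← h, keySum_of_nodup hL he]
    _ ≤ L'.length := by
        have := sum_count_le_length (l' := L'.map Prod.fst) hL
        simpa [List.map_map, Function.comp_def] using this

/-! ### The affine action -/

/-- The affine permutation of `G → A` given by conjugating the argument by `x` and then adding `c` at
the point `x`. -/
noncomputable def affinePerm {G A : Type*} [Group G] [AddCommGroup A] (x : G) (c : A) :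
    Equiv.Perm (G → A) where
  toFun F t := F (x⁻¹ * t * x) + if t = x then c else 0
  invFun F t := F (x * t * x⁻¹) - if t = x then c else 0
  left_inv F := by
    ext t
    have : x * t * x⁻¹ = x ↔ t = x := by
      rw [mul_inv_eq_iff_eq_mul, mul_right_inj]
    simp only [this, add_sub_cancel_right]
    simp [mul_assoc]
  right_inv F := by
    ext t
    have : x⁻¹ * t * x = x ↔ t = x := by
      rw [mul_eq_right, inv_mul_eq_one, eq_comm]
    simp only [this, sub_add_cancel]
    simp [mul_assoc]

lemma affinePerm_apply {G A : Type*} [Group G] [AddCommGroup A] (x : G) (c : A) (F : G → A)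
    (t : G) : affinePerm x c F t = F (x⁻¹ * t * x) + if t = x then c else 0 := rfl

lemma affinePerm_zpow {G A : Type*} [Group G] [AddCommGroup A] (x : G) (c : A) (a : ℤ) (F : G → A)
    (t : G) : (affinePerm x c ^ a) F t =
      F ((x ^ a)⁻¹ * t * x ^ a) + if t = x then a • c else 0 := by
  have hx : ∀ t : G, x⁻¹ * t * x = x ↔ t = x := fun t => by
    rw [mul_eq_right, inv_mul_eq_one, eq_comm]
  have hx' : ∀ t : G, x * t * x⁻¹ = x ↔ t = x := fun t => by
    rw [mul_inv_eq_iff_eq_mul, mul_right_inj]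
  induction a generalizing t with
  | zero => simp
  | succ a ih =>
    rw [add_comm (a : ℤ) 1, zpow_one_add, Equiv.Perm.mul_apply, affinePerm_apply, ih, hx, zpow_one_add,
      add_smul]
    split_ifs <;> simp [mul_assoc, add_comm, add_assoc]
  | pred a ih =>
    have hinv : ∀ (F : G → A) t, (affinePerm x c)⁻¹ F t =
      F (x * t * x⁻¹) - if t = x then c else 0 := fun F t => rfl
    rw [sub_eq_neg_add (-(a : ℤ)) 1, zpow_add, zpow_neg_one, Equiv.Perm.mul_apply, hinv, ih, hx',
      zpow_add, add_smul]
    split_ifs <;> simp [mul_assoc, sub_eq_add_neg, add_comm, add_left_comm]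

/-- The alternating product `xyxy⋯` of `k` factors. -/
def altProd {G : Type*} [Group G] (x y : G) : ℕ → G
  | 0 => 1
  | k + 1 => x * altProd y x k

lemma lift_altWord {V G : Type*} [Group G] (φ : V → G) (x y : V) (k : ℕ) :
    FreeGroup.lift φ (DyerGraph.altWord x y k) = altProd (φ x) (φ y) k := by
  induction k generalizing x y with
  | zero => simp [DyerGraph.altWord, altProd]
  | succ k ih => simp [DyerGraph.altWord, altProd, ih]

lemma mul_pow_swap {G : Type*} [Group G] (x y : G) (k : ℕ) : x * (y * x) ^ k = (x * y) ^ k * x := by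
  induction k with
  | zero => simp
  | succ k ih => rw [pow_succ, ← mul_assoc, ih, pow_succ]; simp only [mul_assoc]

lemma altProd_eq {G : Type*} [Group G] {x y : G} (hx : x * x = 1) (hy : y * y = 1) (k : ℕ) :
    altProd x y k = (x * y) ^ k * altProd y x k := by
  induction k generalizing x y with
  | zero => simp [altProd]
  | succ k ih =>
    simp only [altProd]
    rw [ih hy hx, ← mul_assoc, mul_pow_swap, pow_succ]
    calc (x * y) ^ k * x * altProd x y k = (x * y) ^ k * x * 1 * altProd x y k := by rw [mul_one]
      _ = _ := by rw [← hy]; simp only [mul_assoc]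

/-- An alternating product of involutions crosses the reflections `(xy)^j x`, `j < k`. -/
lemma altProd_affine {G A : Type*} [Group G] [AddCommGroup A] {x y : G} (hx : x * x = 1)
    (hy : y * y = 1) (c : A) (k : ℕ) (F : G → A) (t : G) :
    altProd (affinePerm x c) (affinePerm y c) k F t =
      F ((altProd x y k)⁻¹ * t * altProd x y k) +
        ∑ j ∈ Finset.range k, if t = (x * y) ^ j * x then c else 0 := by
  induction k generalizing x y t with
  | zero => simp [altProd]
  | succ k ih =>
    simp only [altProd]
    rw [Equiv.Perm.mul_apply, affinePerm_apply, ih hy hx, Finset.sum_range_succ']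
    have hxi : x⁻¹ = x := inv_eq_of_mul_eq_one_left hx
    have : ∀ j, x⁻¹ * t * x = (y * x) ^ j * y ↔ t = (x * y) ^ (j + 1) * x := by
      intro j
      rw [mul_assoc, inv_mul_eq_iff_eq_mul, ← eq_mul_inv_iff_mul_eq, hxi, ← mul_assoc, mul_pow_swap,
        pow_succ]
      simp only [mul_assoc]
    simp only [this, pow_zero, one_mul, add_assoc]
    simp only [mul_assoc, mul_inv_rev]

lemma braid_affine {G A : Type*} [Group G] [AddCommGroup A] {x y : G} (hx : x * x = 1)
    (hy : y * y = 1) (c : A) (m : ℕ) (h : altProd x y m = altProd y x m) :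
    altProd (affinePerm x c) (affinePerm y c) m = altProd (affinePerm y c) (affinePerm x c) m := by
  have hm : (x * y) ^ m = 1 := by
    have := altProd_eq hx hy m
    rw [h] at this
    exact right_eq_mul.1 this
  ext F t
  rw [altProd_affine hx hy, altProd_affine hy hx, h, ← Finset.sum_range_reflect]
  congr 1
  apply Finset.sum_congr rfl
  intro j hj
  rw [Finset.mem_range] at hj
  -- the `j`-th reflection met by `yxy⋯` is the `(m - 1 - j)`-th one met by `xyx⋯`
  have : (x * y) ^ (m - 1 - j) * x = (y * x) ^ j * y := by
    have h1 : (x * y) ^ (m - 1 - j) * ((x * y) ^ j * (x * y)) = 1 := by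
      rw [← pow_succ, ← pow_add, show m - 1 - j + (j + 1) = m by omega, hm]
    have h2 : (y * x) = (x * y)⁻¹ := by
      rw [mul_inv_rev, inv_eq_of_mul_eq_one_left hx, inv_eq_of_mul_eq_one_left hy]
    rw [mul_eq_one_iff_eq_inv, mul_inv_rev, ← inv_pow, ← h2] at h1
    rw [h1, ← pow_succ', pow_succ, mul_assoc, mul_assoc, hx, mul_one]
  rw [this]

namespace DyerGraph

variable {V : Type*} (Γ : DyerGraph V)

/-- The order attached to a vertex as a natural number, with `0` in place of `∞`. -/
noncomputable def ord (x : V) : ℕ := (Γ.f x).toNat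

lemma lift_gen (r : FreeGroup V) : FreeGroup.lift Γ.gen r = PresentedGroup.mk Γ.rels r := by
  have : FreeGroup.lift Γ.gen = PresentedGroup.mk Γ.rels := by
    ext x; simp [gen, PresentedGroup.of]
  rw [this]

lemma gen_pow_ord (x : V) : Γ.gen x ^ Γ.ord x = 1 := by
  by_cases h : Γ.f x = ⊤
  · simp [ord, h]
  · have hr : FreeGroup.of x ^ (Γ.f x).toNat ∈ Γ.rels := Or.inl ⟨x, h, rfl⟩
    have := PresentedGroup.one_of_mem hr
    simpa [← lift_gen, ord] using this

lemma altProd_gen {x y : V} (h : Γ.Adj x y) :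
    altProd (Γ.gen x) (Γ.gen y) (Γ.m x y) = altProd (Γ.gen y) (Γ.gen x) (Γ.m x y) := by
  have hr : altWord x y (Γ.m x y) * (altWord y x (Γ.m x y))⁻¹ ∈ Γ.rels := Or.inr ⟨x, y, h, rfl⟩
  have := PresentedGroup.one_of_mem hr
  rw [← lift_gen, _root_.map_mul, map_inv, lift_altWord, lift_altWord, mul_inv_eq_one] at this
  exact this

/-- The affine permutation of `D → ℤ/n` by which the generator `x` acts. It translates only if `x`
has order parameter `n`. -/
noncomputable def act (n : ℕ) (x : V) : Equiv.Perm (Γ.DyerGroup → ZMod n) :=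
  affinePerm (Γ.gen x) (if Γ.ord x = n then 1 else 0)

lemma act_rels (n : ℕ) : ∀ r ∈ Γ.rels, FreeGroup.lift (Γ.act n) r = 1 := by
  rintro r (⟨x, -, rfl⟩ | ⟨x, y, hxy, rfl⟩)
  · rw [map_pow, FreeGroup.lift_apply_of]
    ext F t
    have h := affinePerm_zpow (Γ.gen x) (if Γ.ord x = n then (1 : ZMod n) else 0) (Γ.ord x) F t
    rw [zpow_natCast, zpow_natCast, gen_pow_ord] at h
    refine h.trans ?_
    split_ifs with h1 h2
    · simp [h2]
    · simp
    · simp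
  · rw [_root_.map_mul, map_inv, lift_altWord, lift_altWord, mul_inv_eq_one]
    have hb := Γ.altProd_gen hxy
    by_cases hm : Γ.m x y = 2
    · rw [hm] at hb ⊢
      simp only [altProd, mul_one] at hb ⊢
      ext F t
      have h1 : (Γ.gen x)⁻¹ * t * Γ.gen x = Γ.gen y ↔ t = Γ.gen y := by
        rw [mul_assoc, inv_mul_eq_iff_eq_mul, hb, mul_left_inj]
      have h2 : (Γ.gen y)⁻¹ * t * Γ.gen y = Γ.gen x ↔ t = Γ.gen x := by
        rw [mul_assoc, inv_mul_eq_iff_eq_mul, ← hb, mul_left_inj]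
      have h3 : (Γ.gen y)⁻¹ * ((Γ.gen x)⁻¹ * t * Γ.gen x) * Γ.gen y =
          (Γ.gen x)⁻¹ * ((Γ.gen y)⁻¹ * t * Γ.gen y) * Γ.gen x := by
        have : (Γ.gen x * Γ.gen y)⁻¹ * t * (Γ.gen x * Γ.gen y) =
          (Γ.gen y * Γ.gen x)⁻¹ * t * (Γ.gen y * Γ.gen x) := by rw [hb]
        simpa only [mul_inv_rev, mul_assoc] using this
      simp only [act, Equiv.Perm.mul_apply, affinePerm_apply, h1, h2, h3]
      abel
    · obtain ⟨hx, hy⟩ := Γ.compat hxy hm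
      have hx : Γ.ord x = 2 := by rw [ord, hx]; rfl
      have hy : Γ.ord y = 2 := by rw [ord, hy]; rfl
      have hx2 := Γ.gen_pow_ord x
      have hy2 := Γ.gen_pow_ord y
      rw [hx, pow_two] at hx2
      rw [hy, pow_two] at hy2
      simp only [act, hx, hy]
      exact braid_affine hx2 hy2 _ _ hb

/-- The affine action of the Dyer group on `D → ℤ/n`; the orbit map of `0` is the wall-crossing
cocycle. -/
noncomputable def actHom (n : ℕ) : Γ.DyerGroup →* Equiv.Perm (Γ.DyerGroup → ZMod n) :=
  PresentedGroup.toGroup (Γ.act_rels n)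

lemma actHom_gen (n : ℕ) (x : V) : Γ.actHom n (Γ.gen x) = Γ.act n x :=
  PresentedGroup.toGroup.of _

/-- The element represented by a syllabic word. -/
noncomputable def wprod (w : List (V × ℤ)) : Γ.DyerGroup := (w.map fun p => Γ.gen p.1 ^ p.2).prod

lemma wprod_cons (p : V × ℤ) (w : List (V × ℤ)) :
    Γ.wprod (p :: w) = Γ.gen p.1 ^ p.2 * Γ.wprod w := rfl

/-- The walls crossed by a syllabic word: the `i`-th syllable `x^a` contributes the conjugate of `x`
by the prefix before it, tagged with the order parameter of `x`, with multiplicity `a`. -/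
noncomputable def walls : List (V × ℤ) → List ((ℕ × Γ.DyerGroup) × ℤ)
  | [] => []
  | p :: w => ((Γ.ord p.1, Γ.gen p.1), p.2) ::
      (walls w).map fun e => ((e.1.1, Γ.gen p.1 ^ p.2 * e.1.2 * (Γ.gen p.1 ^ p.2)⁻¹), e.2)

/-- Wall multiplicities modulo the order depend only on the represented element. -/
lemma keySum_walls (n : ℕ) (w : List (V × ℤ)) (t : Γ.DyerGroup) :
    (keySum (Γ.walls w) (n, t) : ZMod n) = Γ.actHom n (Γ.wprod w) 0 t := by
  induction w generalizing t with
  | nil => simp [walls, wprod, keySum]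
  | cons p w ih =>
    rw [wprod_cons, _root_.map_mul, map_zpow, actHom_gen, Equiv.Perm.mul_apply, act,
      affinePerm_zpow, ← ih]
    have h : ∀ s : Γ.DyerGroup, Γ.gen p.1 ^ p.2 * s * (Γ.gen p.1 ^ p.2)⁻¹ = t ↔
        s = (Γ.gen p.1 ^ p.2)⁻¹ * t * Γ.gen p.1 ^ p.2 := by
      intro s
      rw [mul_inv_eq_iff_eq_mul, mul_assoc, eq_inv_mul_iff_mul_eq]
    simp only [keySum, walls, List.map_cons, List.sum_cons, List.map_map, Function.comp_def,
      Prod.ext_iff, h, Int.cast_add]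
    rw [add_comm]
    congr 1
    by_cases h1 : Γ.ord p.1 = n <;> by_cases h2 : t = Γ.gen p.1 <;> simp [h1, h2, eq_comm]

lemma orderOf_gen (x : V) : orderOf (Γ.gen x) = Γ.ord x := by
  apply Nat.dvd_antisymm (orderOf_dvd_of_pow_eq_one (Γ.gen_pow_ord x))
  have h1 := Γ.keySum_walls (Γ.ord x) [(x, (orderOf (Γ.gen x) : ℤ))] (Γ.gen x)
  have h2 : Γ.wprod [(x, (orderOf (Γ.gen x) : ℤ))] = 1 := by simp [wprod, pow_orderOf_eq_one]
  rw [h2, map_one] at h1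
  simp [keySum, walls] at h1
  exact (ZMod.natCast_eq_zero_iff _ _).1 h1

/-! ### Reduced words cross distinct walls -/

/-- A syllable can be moved to the front of the word, where it becomes a power of its wall. -/
lemma exists_extract (w : List (V × ℤ)) (e) (he : e ∈ Γ.walls w) :
    ∃ w' : List (V × ℤ), w'.length + 1 = w.length ∧ Γ.wprod w = e.1.2 ^ e.2 * Γ.wprod w' := by
  induction w generalizing e with
  | nil => simp [walls] at he
  | cons p w ih =>
    simp only [walls, List.mem_cons, List.mem_map] at he
    rcases he with rfl | ⟨e, he, rfl⟩
    · exact ⟨w, rfl, rfl⟩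
    · obtain ⟨w', h1, h2⟩ := ih e he
      refine ⟨p :: w', by simp [h1], ?_⟩
      rw [wprod_cons, wprod_cons, h2, conj_zpow]
      simp only [mul_assoc, inv_mul_cancel_left]

lemma exists_shorter (w : List (V × ℤ)) (h : ¬ ((Γ.walls w).map Prod.fst).Nodup) :
    ∃ w' : List (V × ℤ), w'.length < w.length ∧ Γ.wprod w' = Γ.wprod w := by
  induction w with
  | nil => simp [walls] at h
  | cons p w ih =>
    rw [walls, List.map_cons, List.nodup_cons, not_and_or, not_not] at h
    rcases h with h | h
    · simp only [List.map_map, List.mem_map, Function.comp_apply, Prod.mk.injEq] at h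
      obtain ⟨e, he, -, h⟩ := h
      -- conjugation by a power of `x` fixes `x`, so the repeated wall is `x` itself
      have h' : e.1.2 = Γ.gen p.1 := by
        rw [mul_inv_eq_iff_eq_mul, (Commute.self_zpow (Γ.gen p.1) p.2).eq, mul_right_inj] at h
        exact h
      obtain ⟨w', h1, h2⟩ := Γ.exists_extract w e he
      refine ⟨(p.1, p.2 + e.2) :: w', by simp [← h1], ?_⟩
      rw [wprod_cons, wprod_cons, h2, h', zpow_add, mul_assoc]
    · have h' : ¬ ((Γ.walls w).map Prod.fst).Nodup := by
        intro hn
        apply h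
        have : ((Γ.walls w).map fun e =>
            ((e.1.1, Γ.gen p.1 ^ p.2 * e.1.2 * (Γ.gen p.1 ^ p.2)⁻¹), e.2)).map Prod.fst =
            ((Γ.walls w).map Prod.fst).map fun k =>
              (k.1, Γ.gen p.1 ^ p.2 * k.2 * (Γ.gen p.1 ^ p.2)⁻¹) := by
          simp [List.map_map, Function.comp_def]
        rw [this]
        apply hn.map
        intro k k' hk
        simp only [Prod.mk.injEq, mul_left_inj, mul_right_inj] at hk
        exact Prod.ext hk.1 hk.2
      obtain ⟨w', h1, h2⟩ := ih h'
      exact ⟨p :: w', by simpa using h1, by rw [wprod_cons, wprod_cons, h2]⟩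

lemma sylLength_le (w : List (V × ℤ)) : sylLength (Set.range Γ.gen) (Γ.wprod w) ≤ w.length := by
  apply Nat.sInf_le
  refine ⟨w.map fun p => (Γ.gen p.1, p.2), by simp, ?_, ?_⟩
  · intro p hp
    obtain ⟨q, -, rfl⟩ := List.mem_map.1 hp
    exact ⟨q.1, rfl⟩
  · simp [wprod, List.map_map, Function.comp_def]

lemma walls_map_snd (w : List (V × ℤ)) : (Γ.walls w).map Prod.snd = w.map Prod.snd := by
  induction w with
  | nil => rfl
  | cons p w ih => simp [walls, List.map_map, Function.comp_def, ← ih]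

lemma walls_cyclicNorm (w : List (V × ℤ)) :
    (Γ.walls w).map (fun e => cyclicNorm e.1.1 e.2) =
      w.map fun p => cyclicNorm (orderOf (Γ.gen p.1)) p.2 := by
  induction w with
  | nil => rfl
  | cons p w ih =>
    rw [List.map_cons, ← ih]
    simp [walls, List.map_map, Function.comp_def, orderOf_gen]

/-! ### Words in the generators and their inverses -/

lemma exists_word_syllable (x : V) (a : ℤ) :
    ∃ u : List Γ.DyerGroup, u.length = cyclicNorm (orderOf (Γ.gen x)) a ∧
      (∀ c ∈ u, c ∈ Set.range Γ.gen ∪ (Set.range Γ.gen)⁻¹) ∧ u.prod = Γ.gen x ^ a := by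
  obtain ⟨L, h1, h2, h3⟩ := exists_list_cyclicNorm (orderOf (Γ.gen x)) a
  refine ⟨L.map fun b => Γ.gen x ^ b, by simp [h1], ?_, ?_⟩
  · intro c hc
    obtain ⟨b, hb, rfl⟩ := List.mem_map.1 hc
    rcases h2 b hb with rfl | rfl
    · left; simp
    · right; simp
  · have h4 : (L.map fun b => Γ.gen x ^ b).prod = Γ.gen x ^ L.sum := by
      clear h1 h2 h3
      induction L with
      | nil => simp
      | cons b L ih => simp [ih, zpow_add]
    rw [h4, zpow_eq_zpow_iff_modEq]
    exact (ZMod.intCast_eq_intCast_iff _ _ _).1 h3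

lemma exists_word (w : List (V × ℤ)) :
    ∃ u : List Γ.DyerGroup,
      u.length = (w.map fun p => cyclicNorm (orderOf (Γ.gen p.1)) p.2).sum ∧
      (∀ c ∈ u, c ∈ Set.range Γ.gen ∪ (Set.range Γ.gen)⁻¹) ∧ u.prod = Γ.wprod w := by
  induction w with
  | nil => exact ⟨[], by simp [wprod]⟩
  | cons p w ih =>
    obtain ⟨u, h1, h2, h3⟩ := ih
    obtain ⟨u', h1', h2', h3'⟩ := Γ.exists_word_syllable p.1 p.2
    refine ⟨u' ++ u, by simp [h1, h1'], ?_, by rw [List.prod_append, h3, h3', wprod_cons]⟩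
    intro c hc
    rcases List.mem_append.1 hc with hc | hc
    · exact h2' c hc
    · exact h2 c hc

lemma exists_unit_syllables (u : List Γ.DyerGroup)
    (hu : ∀ c ∈ u, c ∈ Set.range Γ.gen ∪ (Set.range Γ.gen)⁻¹) :
    ∃ v : List (V × ℤ), v.length = u.length ∧ (∀ p ∈ v, p.2 = 1 ∨ p.2 = -1) ∧
      Γ.wprod v = u.prod := by
  induction u with
  | nil => exact ⟨[], by simp [wprod]⟩
  | cons c u ih =>
    obtain ⟨v, h1, h2, h3⟩ := ih fun c hc => hu c (List.mem_cons_of_mem _ hc)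
    rcases hu c List.mem_cons_self with ⟨x, hx⟩ | ⟨x, hx⟩
    · refine ⟨(x, 1) :: v, by simp [h1], ?_, by simp [wprod_cons, hx, h3]⟩
      intro p hp
      rcases List.mem_cons.1 hp with rfl | hp
      · left; rfl
      · exact h2 p hp
    · refine ⟨(x, -1) :: v, by simp [h1], ?_, by simp [wprod_cons, hx, h3]⟩
      intro p hp
      rcases List.mem_cons.1 hp with rfl | hp
      · right; rfl
      · exact h2 p hp

end DyerGraph

/-- If `(x_1^{a_1}, …, x_l^{a_l})` is a reduced syllabic representative of `g`, then
`l_V(g) = ‖a_1‖_{o(x_1)} + ⋯ + ‖a_l‖_{o(x_l)}`. -/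
theorem wordLength_eq_sum_cyclicNorm_of_reduced
    {V : Type} [Fintype V] (Γ : DyerGraph V) (g : Γ.DyerGroup) (w : List (V × ℤ))
    (hprod : (w.map fun p => Γ.gen p.1 ^ p.2).prod = g)
    (hred : w.length = sylLength (Set.range Γ.gen) g) :
    wordLength (Set.range Γ.gen) g =
      (w.map fun p => cyclicNorm (orderOf (Γ.gen p.1)) p.2).sum := by
  have hw : Γ.wprod w = g := hprod
  have hnodup : ((Γ.walls w).map Prod.fst).Nodup := by
    by_contra h
    obtain ⟨w', h1, h2⟩ := Γ.exists_shorter w h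
    have := Γ.sylLength_le w'
    rw [h2, hw] at this
    omega
  have hmem : (w.map fun p => cyclicNorm (orderOf (Γ.gen p.1)) p.2).sum ∈
      {n | ∃ u : List Γ.DyerGroup, u.length = n ∧
        (∀ a ∈ u, a ∈ Set.range Γ.gen ∪ (Set.range Γ.gen)⁻¹) ∧ u.prod = g} := by
    rw [← hw]
    exact Γ.exists_word w
  apply le_antisymm (Nat.sInf_le hmem)
  obtain ⟨u, hlen, hu, hug⟩ := Nat.sInf_mem ⟨_, hmem⟩
  obtain ⟨v, h1, h2, h3⟩ := Γ.exists_unit_syllables u hu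
  have hlenv : (Γ.walls v).length = v.length := by
    simpa using congrArg List.length (Γ.walls_map_snd v)
  have hle := sum_cyclicNorm_le_length Prod.fst (L' := Γ.walls v) hnodup
    (by
      intro e he
      have : e.2 ∈ v.map Prod.snd := Γ.walls_map_snd v ▸ List.mem_map_of_mem he
      obtain ⟨p, hp, hpe⟩ := List.mem_map.1 this
      exact hpe ▸ h2 p hp)
    (by
      rintro ⟨n, t⟩
      rw [Γ.keySum_walls n w t, Γ.keySum_walls n v t, h3, hug, hw])
  rw [Γ.walls_cyclicNorm, hlenv, h1, hlen] at hle
  exact hle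
end

section
/- Let (D,V) be a Dyer system, let X ⊆ V, and let D_X be the standard parabolic subgroup generated by X. Then for every g ∈ D_X, the word length of g in D_X with respect to X equals the word length of g in D with respect to V: l_X(g) = l_V(g). -/
/-!
Only the inequality `l_X(g) ≤ l_V(g)` needs an argument. The Dyer group `D` is embedded into a
Coxeter group, where the corresponding fact follows from the exchange condition.

Let `σ_v` be the automorphism of `D` inverting `x_v` and fixing the other generators. These are
commuting involutions, and in `D ⋊ Aut D` the elements `a_v = x_v σ_v` and `b_v = σ_v` satisfy the
relations of a Coxeter group `W` with generators `a_v, b_v` (`v ∈ V`), in which `a_v b_v` has order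
`f v`, the pair `a_u, a_v` has the label of the edge `{u, v}`, and all other pairs commute. (If
`f v = 2` then `σ_v` is trivial and `b_v` is a harmless extra central generator of `W`.)
Conversely `x_v ↦ a_v b_v`, or `x_v ↦ a_v` when `f v = 2`, defines a homomorphism `D → W`, and the
composite `D → W → D ⋊ Aut D` is the inclusion.

Give each `a_v` weight one and each `b_v` weight zero. A word of length `n` over `V ∪ V⁻¹` becomes
a Coxeter word of weight `n` (`DyerGraph.exists_coxWord`). If it represents an element of `D_X`,
its image lies in the parabolic subgroup generated by the letters over `X`. By the deletion
condition some subword is reduced and represents the same element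
(`CoxeterSystem.exists_sublist_isReduced`), and a reduced word for an element of a parabolic
subgroup uses only letters of that subgroup (`CoxeterSystem.simple_mem_of_isReduced`). Going back
to `D ⋊ Aut D` and moving the `σ_v` to the right, this subword of weight at most `n` becomes a word
of length at most `n` over `X ∪ X⁻¹` (`DyerGraph.exists_dyerWord`).

The exchange condition is obtained in the usual way from the action of `W` on `W × ℤ/2` which counts
modulo two how often a reflection occurs in the inversion sequence of a word.
-/


open scoped Classical

/-! ### The exchange condition in a Coxeter group -/

namespace CoxeterSystem

variable {B W : Type*} [Group W] {M : CoxeterMatrix B} (cs : CoxeterSystem M W)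

/-- The action of a simple reflection `s` on `W × ℤ/2`, namely
`(t, ε) ↦ (s t s, ε + [t = s])`, which records whether `t` is the reflection `s`. -/
noncomputable def flip (i : B) : Function.End (W × ZMod 2) := fun p =>
  (cs.simple i * p.1 * cs.simple i, p.2 + if p.1 = cs.simple i then 1 else 0)

/-- With `r = s_i s_j`, the reflections counted by the `n`-th pair of factors are
`r⁻ⁿ s_j rⁿ = s_j r²ⁿ` and `r⁻ⁿ (s_j s_i s_j) rⁿ = s_j r²ⁿ⁺¹` (with `n` starting at zero), whence
the sum over a single range. -/
theorem flip_mul_flip_pow (i j : B) (n : ℕ) (t : W) (ε : ZMod 2) :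
    ((cs.flip i * cs.flip j) ^ n) (t, ε) =
      ((cs.simple i * cs.simple j) ^ n * t * ((cs.simple i * cs.simple j) ^ n)⁻¹,
        ε + ∑ k ∈ Finset.range (2 * n),
          if t = cs.simple j * (cs.simple i * cs.simple j) ^ k then 1 else 0) := by
  induction n with
  | zero => simp; rfl
  | succ n ih =>
    set r := cs.simple i * cs.simple j with hr
    have hinv : r⁻¹ = cs.simple j * cs.simple i := by simp [hr]
    have hconj : ∀ k : ℕ, (r ^ k)⁻¹ * cs.simple j = cs.simple j * r ^ k := by
      intro k
      induction k with
      | zero => simp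
      | succ k ihk =>
        rw [pow_succ, mul_inv_rev, mul_assoc, ihk, hinv, ← pow_succ, pow_succ']
        simp [hr, mul_assoc]
    have e1 : r ^ n * t * (r ^ n)⁻¹ = cs.simple j ↔ t = cs.simple j * r ^ (2 * n) := by
      rw [two_mul, pow_add, ← mul_assoc, ← hconj]
      constructor
      · intro h; rw [← h]; group
      · rintro rfl; group
    have e2 : cs.simple j * (r ^ n * t * (r ^ n)⁻¹) * cs.simple j = cs.simple i ↔
        t = cs.simple j * r ^ (2 * n + 1) := by
      have h1 : cs.simple j * r ^ (2 * n + 1) =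
          (r ^ n)⁻¹ * (cs.simple j * cs.simple i * cs.simple j) * r ^ n := by
        have : 2 * n + 1 = n + 1 + n := by omega
        rw [this, pow_add, pow_succ, ← mul_assoc, ← mul_assoc, ← hconj, hr]
        simp only [mul_assoc]
      rw [h1]
      constructor
      · intro h; rw [← h]
        simp [mul_assoc]
      · rintro rfl
        simp [mul_assoc]
    rw [pow_succ']
    change (cs.flip i * cs.flip j) (((cs.flip i * cs.flip j) ^ n) (t, ε)) = _
    rw [ih]
    change cs.flip i (cs.flip j _) = _
    have h2 : 2 * (n + 1) = 2 * n + 1 + 1 := by omega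
    rw [h2, Finset.sum_range_succ, Finset.sum_range_succ]
    refine Prod.ext ?_ ?_
    · simp [flip, hr, pow_succ', mul_assoc]
    · simp only [flip, e1, e2, add_assoc]

theorem isLiftable_flip : M.IsLiftable cs.flip := by
  intro i j
  funext ⟨t, ε⟩
  rw [flip_mul_flip_pow, cs.simple_mul_simple_pow, two_mul, Finset.sum_range_add]
  simp only [pow_add, cs.simple_mul_simple_pow, one_mul, inv_one, mul_one]
  rw [CharTwo.add_self_eq_zero, add_zero]
  rfl

/-- The action of `W` on `W × ℤ/2` extending `flip`. -/
noncomputable def flipHom : W →* Function.End (W × ZMod 2) :=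
  cs.lift ⟨cs.flip, cs.isLiftable_flip⟩

theorem flipHom_wordProd (ω : List B) (t : W) (ε : ZMod 2) :
    cs.flipHom (cs.wordProd ω) (t, ε) =
      (cs.wordProd ω * t * (cs.wordProd ω)⁻¹, ε + ((cs.rightInvSeq ω).count t : ZMod 2)) := by
  induction ω with
  | nil => simp; rfl
  | cons i ω ih =>
    have h : cs.flipHom (cs.simple i) = cs.flip i := cs.lift_apply_simple _ i
    rw [wordProd_cons, map_mul]
    change cs.flipHom (cs.simple i) (cs.flipHom (cs.wordProd ω) (t, ε)) = _
    rw [ih, h]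
    have e : cs.wordProd ω * t * (cs.wordProd ω)⁻¹ = cs.simple i ↔
        (cs.wordProd ω)⁻¹ * cs.simple i * cs.wordProd ω = t := by
      constructor
      · intro h; rw [← h]; group
      · rintro rfl; group
    refine Prod.ext ?_ ?_
    · simp [flip, mul_assoc]
    · simp only [flip, rightInvSeq, List.count_cons, e, beq_iff_eq, Nat.cast_add, add_assoc]
      push_cast
      rfl

/-- The multiplicity of a reflection in the inversion sequence of a word depends, modulo two,
only on the element that the word represents. -/
theorem count_rightInvSeq_congr {ω ω' : List B} (h : cs.wordProd ω = cs.wordProd ω') (t : W) :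
    ((cs.rightInvSeq ω).count t : ZMod 2) = (cs.rightInvSeq ω').count t := by
  have h1 := cs.flipHom_wordProd ω t 0
  rw [h, cs.flipHom_wordProd ω' t 0] at h1
  simpa using (congrArg Prod.snd h1).symm

/-- The exchange condition; the word `ω` need not be reduced. -/
theorem exists_eraseIdx (ω : List B) (i : B)
    (h : cs.length (cs.wordProd ω * cs.simple i) < cs.length (cs.wordProd ω)) :
    ∃ j < ω.length, cs.wordProd (ω.eraseIdx j) = cs.wordProd ω * cs.simple i := by
  obtain ⟨ω', hred, hω'⟩ := cs.exists_isReduced (cs.wordProd ω * cs.simple i)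
  have hprod : cs.wordProd (ω'.concat i) = cs.wordProd ω := by
    rw [wordProd_concat, ← hω', simple_mul_simple_cancel_right]
  have hred' : cs.IsReduced (ω'.concat i) := by
    have h1 := cs.length_wordProd_le (ω'.concat i)
    rw [IsReduced, hprod]
    rw [IsReduced, ← hω'] at hred
    rw [hprod] at h1
    simp only [List.length_concat] at h1 ⊢
    omega
  have hmem : cs.simple i ∈ cs.rightInvSeq (ω'.concat i) := by
    rw [rightInvSeq_concat]; simp
  have hcount : (cs.rightInvSeq (ω'.concat i)).count (cs.simple i) = 1 :=
    List.count_eq_one_of_mem hred'.nodup_rightInvSeq hmem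
  have hcongr := cs.count_rightInvSeq_congr hprod (cs.simple i)
  rw [hcount] at hcongr
  have hmem' : cs.simple i ∈ cs.rightInvSeq ω := by
    by_contra hn
    rw [List.count_eq_zero_of_not_mem hn] at hcongr
    simp at hcongr
  obtain ⟨j, hj, hji⟩ := List.getElem_of_mem hmem'
  refine ⟨j, by simpa using hj, ?_⟩
  rw [← wordProd_mul_getD_rightInvSeq, List.getD_eq_getElem _ _ hj, hji]

/-- The deletion condition. -/
theorem exists_sublist_isReduced (ω : List B) :
    ∃ ω', ω'.Sublist ω ∧ cs.IsReduced ω' ∧ cs.wordProd ω' = cs.wordProd ω := by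
  induction ω using List.reverseRecOn with
  | nil => exact ⟨[], .refl _, by simp [IsReduced], rfl⟩
  | append_singleton ω i ih =>
    obtain ⟨ω', hsub, hred, hprod⟩ := ih
    have happ : ∀ τ : List B, cs.wordProd (τ ++ [i]) = cs.wordProd τ * cs.simple i := by
      intro τ; simp [wordProd_append]
    rcases cs.length_mul_simple (cs.wordProd ω') i with h | h
    · refine ⟨ω' ++ [i], hsub.append (.refl _), ?_, ?_⟩
      · rw [IsReduced, happ, h, hred.eq]; simp
      · rw [happ, happ, hprod]
    · obtain ⟨j, hj, hje⟩ := cs.exists_eraseIdx ω' i (by omega)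
      refine ⟨ω'.eraseIdx j,
        (List.eraseIdx_sublist _ _).trans (hsub.trans (List.sublist_append_left _ _)), ?_, ?_⟩
      · rw [IsReduced, hje, List.length_eraseIdx_of_lt hj]
        have := hred.eq
        omega
      · rw [hje, happ, hprod]

/-- A reduced word for an element of a standard parabolic subgroup `W_X` only involves simple
reflections lying in `X`. -/
theorem simple_mem_of_isReduced (X : Set B) (ω : List B) (hω : cs.IsReduced ω) :
    ∀ u : List B, (∀ b ∈ u, b ∈ X) → cs.wordProd u = cs.wordProd ω →
      ∀ i ∈ ω, cs.simple i ∈ cs.simple '' X := by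
  induction ω using List.reverseRecOn with
  | nil => simp
  | append_singleton ω i ih =>
    intro u hu huω
    have hω' : cs.IsReduced ω := by
      have := hω.take ω.length
      simpa using this
    have happ : cs.wordProd (ω ++ [i]) = cs.wordProd ω * cs.simple i := by
      simp [wordProd_append]
    have hus : cs.wordProd u * cs.simple i = cs.wordProd ω := by
      rw [huω, happ, simple_mul_simple_cancel_right]
    obtain ⟨j, -, hje⟩ := cs.exists_eraseIdx u i (by
      rw [hus, huω, hω'.eq, hω.eq]; simp)
    have hu' : ∀ b ∈ u.eraseIdx j, b ∈ X := fun b hb =>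
      hu b ((List.eraseIdx_sublist _ _).subset hb)
    -- The element `s_i` is the product of the `X`-word `u⁻¹ (u.eraseIdx j)`, so by deletion it
    -- is an `X`-word of length one.
    obtain ⟨v, hvsub, hvred, hv⟩ := cs.exists_sublist_isReduced (u.reverse ++ u.eraseIdx j)
    have hvs : cs.wordProd v = cs.simple i := by
      rw [hv, wordProd_append, wordProd_reverse, hje]; group
    have hlen : v.length = 1 := by rw [← hvred.eq, hvs, length_simple]
    obtain ⟨x, rfl⟩ := List.length_eq_one_iff.mp hlen
    have hx : x ∈ X := by
      have := hvsub.subset (List.mem_singleton_self x)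
      rw [List.mem_append, List.mem_reverse] at this
      exact this.elim (hu x) (hu' x)
    have hi : cs.simple i ∈ cs.simple '' X := ⟨x, hx, by simpa using hvs⟩
    intro b hb
    rw [List.mem_append, List.mem_singleton] at hb
    rcases hb with hb | rfl
    · exact ih hω' _ hu' (hje.trans hus) b hb
    · exact hi

end CoxeterSystem

/-! ### Homomorphisms out of a Dyer group -/

namespace DyerGraph

variable {V : Type*} (Γ : DyerGraph V)

theorem lift_altWord_mul_inv {G : Type*} [Group G] (F : V → G) (n : ℕ) :
    ∀ x y : V, F x * F x = 1 → F y * F y = 1 →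
      FreeGroup.lift F (altWord x y n) * (FreeGroup.lift F (altWord y x n))⁻¹ =
        (F x * F y) ^ n := by
  induction n with
  | zero => simp [altWord]
  | succ n ih =>
    intro x y hx hy
    have h := ih y x hy hx
    have hy' : (F y)⁻¹ = F y := inv_eq_of_mul_eq_one_left hy
    have hpow : (F x * F y) ^ (n + 1) = F x * (F y * F x) ^ n * F y := by
      rw [← mul_pow_mul, mul_assoc, pow_succ]
    rw [hpow, ← h]
    simp only [altWord, map_mul, FreeGroup.lift_apply_of, mul_inv_rev, hy', mul_assoc]

/-- A family of elements extends to the Dyer group as soon as it satisfies the order relations,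
the commutation relations and, for the remaining edges, the Coxeter relations. -/
theorem lift_rels_eq_one {G : Type*} [Group G] (F : V → G)
    (hpow : ∀ x, F x ^ (Γ.f x).toNat = 1)
    (hcomm : ∀ x y, Γ.Adj x y → Γ.m x y = 2 → F x * F y = F y * F x)
    (hbraid : ∀ x y, Γ.Adj x y → Γ.f x = 2 → Γ.f y = 2 → (F x * F y) ^ Γ.m x y = 1) :
    ∀ r ∈ Γ.rels, FreeGroup.lift F r = 1 := by
  rintro r (⟨x, -, rfl⟩ | ⟨x, y, hxy, rfl⟩)
  · simpa using hpow x
  · by_cases hm : Γ.m x y = 2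
    · rw [hm]
      simp [altWord, hcomm x y hxy hm]
    · obtain ⟨hx, hy⟩ := Γ.compat hxy hm
      have sq : ∀ z, Γ.f z = 2 → F z * F z = 1 := by
        intro z hz
        have := hpow z
        rwa [hz, show (2 : ℕ∞).toNat = 2 from rfl, pow_two] at this
      rw [map_mul, map_inv, lift_altWord_mul_inv F _ x y (sq x hx) (sq y hy)]
      exact hbraid x y hxy hx hy

theorem lift_gen_eq_one (r : FreeGroup V) (hr : r ∈ Γ.rels) :
    FreeGroup.lift Γ.gen r = 1 := by
  have h : FreeGroup.lift Γ.gen = PresentedGroup.mk Γ.rels := by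
    ext x; simp [gen]; rfl
  rw [h]
  exact PresentedGroup.one_of_mem hr

theorem gen_pow (x : V) : Γ.gen x ^ (Γ.f x).toNat = 1 := by
  by_cases h : Γ.f x = ⊤
  · simp [h]
  · simpa using Γ.lift_gen_eq_one _ (Or.inl ⟨x, h, rfl⟩)

theorem gen_mul_self (x : V) (hx : Γ.f x = 2) : Γ.gen x * Γ.gen x = 1 := by
  have := Γ.gen_pow x
  rwa [hx, show (2 : ℕ∞).toNat = 2 from rfl, pow_two] at this

theorem gen_comm (x y : V) (h : Γ.Adj x y) (hm : Γ.m x y = 2) :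
    Γ.gen x * Γ.gen y = Γ.gen y * Γ.gen x := by
  have := Γ.lift_gen_eq_one _ (Or.inr ⟨x, y, h, rfl⟩)
  rw [hm] at this
  simp only [altWord, map_mul, map_inv, FreeGroup.lift_apply_of, mul_one] at this
  exact mul_inv_eq_one.mp this

theorem gen_braid (x y : V) (h : Γ.Adj x y) (hx : Γ.f x = 2) (hy : Γ.f y = 2) :
    (Γ.gen x * Γ.gen y) ^ Γ.m x y = 1 := by
  have := Γ.lift_gen_eq_one _ (Or.inr ⟨x, y, h, rfl⟩)
  rwa [map_mul, map_inv, lift_altWord_mul_inv Γ.gen _ x y (Γ.gen_mul_self x hx)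
    (Γ.gen_mul_self y hy)] at this

theorem gen_inv (x : V) (hx : Γ.f x = 2) : (Γ.gen x)⁻¹ = Γ.gen x :=
  inv_eq_of_mul_eq_one_left (Γ.gen_mul_self x hx)

/-! ### The automorphisms inverting one generator -/

/-- The generators of the Dyer group with the one at `v` replaced by its inverse. -/
noncomputable def genInvAt (v x : V) : Γ.DyerGroup :=
  if x = v then (Γ.gen x)⁻¹ else Γ.gen x

theorem genInvAt_of_f_eq_two (v x : V) (hx : Γ.f x = 2) : Γ.genInvAt v x = Γ.gen x := by
  unfold genInvAt
  split_ifs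
  · exact Γ.gen_inv x hx
  · rfl

theorem genInvAt_rels (v : V) : ∀ r ∈ Γ.rels, FreeGroup.lift (Γ.genInvAt v) r = 1 := by
  refine Γ.lift_rels_eq_one _ ?_ ?_ ?_
  · intro x
    unfold genInvAt
    split_ifs
    · rw [inv_pow, Γ.gen_pow, inv_one]
    · exact Γ.gen_pow x
  · intro x y h hm
    have hc : Commute (Γ.gen x) (Γ.gen y) := Γ.gen_comm x y h hm
    change Commute _ _
    unfold genInvAt
    split_ifs <;> simpa using hc
  · intro x y h hx hy
    rw [Γ.genInvAt_of_f_eq_two v x hx, Γ.genInvAt_of_f_eq_two v y hy]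
    exact Γ.gen_braid x y h hx hy

/-- The endomorphism of the Dyer group inverting the generator at `v` and fixing the others. -/
noncomputable def invAtHom (v : V) : Γ.DyerGroup →* Γ.DyerGroup :=
  PresentedGroup.toGroup (Γ.genInvAt_rels v)

theorem invAtHom_gen (v x : V) : Γ.invAtHom v (Γ.gen x) = Γ.genInvAt v x :=
  PresentedGroup.toGroup.of _

theorem hom_ext {G : Type*} [Group G] {p q : Γ.DyerGroup →* G}
    (h : ∀ x, p (Γ.gen x) = q (Γ.gen x)) : p = q := PresentedGroup.ext h

theorem invAtHom_comp_self (v : V) :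
    (Γ.invAtHom v).comp (Γ.invAtHom v) = MonoidHom.id _ := by
  refine Γ.hom_ext fun x => ?_
  by_cases h : x = v <;> simp [invAtHom_gen, genInvAt, h]

/-- The involutive automorphism `σ_v` inverting the generator at `v` and fixing the others. -/
noncomputable def invAt (v : V) : MulAut Γ.DyerGroup :=
  MonoidHom.toMulEquiv (Γ.invAtHom v) (Γ.invAtHom v) (Γ.invAtHom_comp_self v)
    (Γ.invAtHom_comp_self v)

theorem invAt_gen (v x : V) : Γ.invAt v (Γ.gen x) = Γ.genInvAt v x := Γ.invAtHom_gen v x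

theorem mulAut_ext {p q : MulAut Γ.DyerGroup}
    (h : ∀ x, p (Γ.gen x) = q (Γ.gen x)) : p = q := by
  have : p.toMonoidHom = q.toMonoidHom := Γ.hom_ext h
  ext g
  exact DFunLike.congr_fun this g

theorem invAt_mul_self (v : V) : Γ.invAt v * Γ.invAt v = 1 := by
  refine Γ.mulAut_ext fun x => ?_
  by_cases h : x = v <;> simp [invAt_gen, genInvAt, h]

theorem invAt_comm (u v : V) : Γ.invAt u * Γ.invAt v = Γ.invAt v * Γ.invAt u := by
  refine Γ.mulAut_ext fun x => ?_
  rw [MulAut.mul_apply, MulAut.mul_apply, invAt_gen, invAt_gen]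
  unfold genInvAt
  split_ifs with h h' h' <;> simp only [map_inv, invAt_gen, genInvAt, if_pos, *] <;>
    split_ifs <;> simp_all

theorem invAt_of_f_eq_two (v : V) (hv : Γ.f v = 2) : Γ.invAt v = 1 := by
  refine Γ.mulAut_ext fun x => ?_
  rw [invAt_gen, MulAut.one_apply, genInvAt]
  split_ifs with h
  · subst h; exact Γ.gen_inv x hv
  · rfl

/-! ### The ambient Coxeter group -/

/-- The Coxeter matrix on two copies of `V`, with letters `a_v = inl v` and `b_v = inr v`:
`m(a_u, a_v)` is the label of the edge (or infinite, encoded by `0`), `m(a_v, b_v) = f v` and all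
other pairs commute. -/
noncomputable def cox : CoxeterMatrix (V ⊕ V) where
  M := Matrix.of fun p q => match p, q with
    | .inl u, .inl v => if u = v then 1 else if Γ.Adj u v then Γ.m u v else 0
    | .inr u, .inr v => if u = v then 1 else 2
    | .inl u, .inr v => if u = v then (Γ.f u).toNat else 2
    | .inr v, .inl u => if u = v then (Γ.f u).toNat else 2
  isSymm := by
    ext p q
    rcases p with u | u <;> rcases q with v | v <;>
      simp only [Matrix.transpose_apply, Matrix.of_apply]
    · have : Γ.Adj u v ↔ Γ.Adj v u := ⟨Γ.symm, Γ.symm⟩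
      simp only [this, Γ.m_symm u v, eq_comm (a := u)]
    · simp only [eq_comm (a := u)]
  diagonal := by rintro (u | u) <;> simp
  off_diagonal := by
    have hf : ∀ u, (Γ.f u).toNat ≠ 1 := by
      intro u h
      have h2 := Γ.f_ge u
      have hne : Γ.f u ≠ ⊤ := by
        intro h'; simp [h'] at h
      rw [← ENat.natCast_toNat hne, h] at h2
      exact absurd h2 (by decide)
    rintro (u | u) (v | v) h
    · have h' : u ≠ v := fun e => h (by rw [e])
      simp only [Matrix.of_apply, if_neg h']
      split_ifs with ha
      · have := Γ.m_ge ha; omega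
      · simp
    · simp only [Matrix.of_apply]
      split_ifs
      · exact hf u
      · simp
    · simp only [Matrix.of_apply]
      split_ifs
      · exact hf v
      · simp
    · have h' : u ≠ v := fun e => h (by rw [e])
      simp [h']

theorem cox_inl_inl_self (u : V) : Γ.cox (.inl u) (.inl u) = 1 := if_pos rfl

theorem cox_inl_inl {u v : V} (h : u ≠ v) :
    Γ.cox (.inl u) (.inl v) = if Γ.Adj u v then Γ.m u v else 0 := if_neg h

theorem cox_inr_inr (u v : V) : Γ.cox (.inr u) (.inr v) = if u = v then 1 else 2 := rfl

theorem cox_inl_inr (u v : V) :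
    Γ.cox (.inl u) (.inr v) = if u = v then (Γ.f u).toNat else 2 := rfl

theorem cox_inr_inl (v u : V) :
    Γ.cox (.inr v) (.inl u) = if u = v then (Γ.f u).toNat else 2 := rfl

/-- The standard Coxeter system of type `cox`. -/
noncomputable abbrev coxSys : CoxeterSystem Γ.cox Γ.cox.Group := Γ.cox.toCoxeterSystem

theorem simple_comm {p q : V ⊕ V} (h : Γ.cox p q = 2) :
    Commute (Γ.coxSys.simple p) (Γ.coxSys.simple q) := by
  have h1 := Γ.coxSys.simple_mul_simple_pow p q
  rw [h, pow_two] at h1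
  have := eq_inv_of_mul_eq_one_left h1
  rw [mul_inv_rev, Γ.coxSys.inv_simple, Γ.coxSys.inv_simple] at this
  exact this

/-- The word in the Coxeter generators representing the image of `x_v`: `a_v` if `f v = 2`, and
`a_v b_v` otherwise. -/
noncomputable def genWord (v : V) : List (V ⊕ V) :=
  if Γ.f v = 2 then [.inl v] else [.inl v, .inr v]

theorem adj_ne {x y : V} (h : Γ.Adj x y) : x ≠ y := by
  rintro rfl; exact Γ.loopless _ h

theorem genWord_rels :
    ∀ r ∈ Γ.rels, FreeGroup.lift (fun v => Γ.coxSys.wordProd (Γ.genWord v)) r = 1 := by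
  refine Γ.lift_rels_eq_one _ ?_ ?_ ?_
  · intro x
    by_cases h : Γ.f x = 2
    · simp only [genWord, h, if_true, show (2 : ℕ∞).toNat = 2 from rfl]
      rw [CoxeterSystem.wordProd_singleton, CoxeterSystem.simple_sq]
    · have := Γ.coxSys.simple_mul_simple_pow (.inl x) (.inr x)
      rw [cox_inl_inr, if_pos rfl] at this
      simpa [genWord, h, CoxeterSystem.wordProd_cons] using this
  · intro x y h hm
    have hne := Γ.adj_ne h
    have h1 : Commute (Γ.coxSys.simple (.inl x)) (Γ.coxSys.simple (.inl y)) :=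
      Γ.simple_comm (by rw [cox_inl_inl Γ hne, if_pos h, hm])
    have h2 : Commute (Γ.coxSys.simple (.inl x)) (Γ.coxSys.simple (.inr y)) :=
      Γ.simple_comm (by rw [cox_inl_inr, if_neg hne])
    have h3 : Commute (Γ.coxSys.simple (.inr x)) (Γ.coxSys.simple (.inl y)) :=
      Γ.simple_comm (by rw [cox_inr_inl, if_neg hne.symm])
    have h4 : Commute (Γ.coxSys.simple (.inr x)) (Γ.coxSys.simple (.inr y)) :=
      Γ.simple_comm (by rw [cox_inr_inr, if_neg hne])
    change Commute _ _
    unfold genWord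
    split_ifs <;> simp only [CoxeterSystem.wordProd_cons, CoxeterSystem.wordProd_nil, mul_one]
    · exact h1
    · exact h1.mul_right h2
    · exact h1.mul_left h3
    · exact (h1.mul_right h2).mul_left (h3.mul_right h4)
  · intro x y h hx hy
    have := Γ.coxSys.simple_mul_simple_pow (.inl x) (.inl y)
    rw [cox_inl_inl Γ (Γ.adj_ne h), if_pos h] at this
    simpa [genWord, hx, hy] using this

/-- The homomorphism from the Dyer group to the Coxeter group given by `genWord`. -/
noncomputable def toCox : Γ.DyerGroup →* Γ.cox.Group :=
  PresentedGroup.toGroup Γ.genWord_rels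

theorem toCox_gen (v : V) : Γ.toCox (Γ.gen v) = Γ.coxSys.wordProd (Γ.genWord v) :=
  PresentedGroup.toGroup.of _

/-! ### The homomorphism back to the holomorph of the Dyer group -/

/-- The holomorph `D ⋊ Aut D`. -/
abbrev Hol := SemidirectProduct Γ.DyerGroup (MulAut Γ.DyerGroup) (MonoidHom.id _)

/-- The images in the holomorph of the Coxeter generators: `a_v ↦ x_v σ_v` and `b_v ↦ σ_v`. -/
noncomputable def holGen : V ⊕ V → Γ.Hol
  | .inl v => ⟨Γ.gen v, Γ.invAt v⟩
  | .inr v => ⟨1, Γ.invAt v⟩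

theorem holGen_mul_self (p : V ⊕ V) : Γ.holGen p * Γ.holGen p = 1 := by
  rcases p with v | v <;>
    refine SemidirectProduct.ext ?_ ?_ <;>
    simp [holGen, invAt_mul_self, invAt_gen, genInvAt]

theorem holGen_comm_mul (p q : V ⊕ V) (h : Commute (Γ.holGen p) (Γ.holGen q)) :
    (Γ.holGen p * Γ.holGen q) ^ 2 = 1 := by
  rw [h.mul_pow, pow_two, pow_two, holGen_mul_self, holGen_mul_self, one_mul]

theorem holGen_inl_inr_comm {u v : V} (h : u ≠ v) :
    Commute (Γ.holGen (.inl u)) (Γ.holGen (.inr v)) := by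
  refine SemidirectProduct.ext ?_ ?_
  · simp [holGen, invAt_gen, genInvAt, h]
  · simp [holGen, Γ.invAt_comm u v]

theorem holGen_inl_mul_inr (u : V) :
    Γ.holGen (.inl u) * Γ.holGen (.inr u) = SemidirectProduct.inl (Γ.gen u) := by
  refine SemidirectProduct.ext ?_ ?_ <;> simp [holGen, invAt_mul_self]

theorem holGen_inl_of_f_eq_two {u : V} (hu : Γ.f u = 2) :
    Γ.holGen (.inl u) = SemidirectProduct.inl (Γ.gen u) := by
  refine SemidirectProduct.ext ?_ ?_ <;> simp [holGen, Γ.invAt_of_f_eq_two u hu]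

theorem isLiftable_holGen : Γ.cox.IsLiftable Γ.holGen := by
  have key : ∀ u v, (Γ.holGen (.inl u) * Γ.holGen (.inr v)) ^ Γ.cox (.inl u) (.inr v) = 1 := by
    intro u v
    rw [cox_inl_inr]
    split_ifs with h
    · subst h
      rw [holGen_inl_mul_inr, ← map_pow, gen_pow, map_one]
    · exact Γ.holGen_comm_mul _ _ (Γ.holGen_inl_inr_comm h)
  rintro (u | u) (v | v)
  · by_cases h : u = v
    · subst h; rw [cox_inl_inl_self, pow_one, holGen_mul_self]
    · rw [cox_inl_inl Γ h]
      split_ifs with ha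
      · by_cases hm : Γ.m u v = 2
        · rw [hm]
          refine Γ.holGen_comm_mul _ _ (SemidirectProduct.ext ?_ ?_)
          · simp [holGen, invAt_gen, genInvAt, h, Ne.symm h, Γ.gen_comm u v ha hm]
          · simp [holGen, Γ.invAt_comm u v]
        · obtain ⟨hu, hv⟩ := Γ.compat ha hm
          rw [Γ.holGen_inl_of_f_eq_two hu, Γ.holGen_inl_of_f_eq_two hv, ← map_mul, ← map_pow,
            Γ.gen_braid u v ha hu hv, map_one]
      · simp
  · exact key u v
  · have h := key v u
    -- The relation for `(b_u, a_v)` is the inverse of the one for `(a_v, b_u)`.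
    have hinv : ∀ p, (Γ.holGen p)⁻¹ = Γ.holGen p := fun p =>
      inv_eq_of_mul_eq_one_left (Γ.holGen_mul_self p)
    rw [Γ.cox.symmetric, ← inv_eq_one, ← inv_pow, mul_inv_rev, hinv, hinv]
    exact h
  · rw [cox_inr_inr]
    split_ifs with h
    · subst h; rw [pow_one, holGen_mul_self]
    · refine Γ.holGen_comm_mul _ _ (SemidirectProduct.ext ?_ ?_)
      · simp [holGen]
      · simp [holGen, Γ.invAt_comm u v]

/-- The homomorphism from the Coxeter group to the holomorph of the Dyer group. -/
noncomputable def toHol : Γ.cox.Group →* Γ.Hol :=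
  Γ.coxSys.lift ⟨Γ.holGen, Γ.isLiftable_holGen⟩

theorem toHol_simple (p : V ⊕ V) : Γ.toHol (Γ.coxSys.simple p) = Γ.holGen p :=
  Γ.coxSys.lift_apply_simple _ p

/-- The composite `D → W → D ⋊ Aut D` is the canonical inclusion. -/
theorem toHol_toCox (g : Γ.DyerGroup) : Γ.toHol (Γ.toCox g) = SemidirectProduct.inl g := by
  have : Γ.toHol.comp Γ.toCox = SemidirectProduct.inl := by
    refine Γ.hom_ext fun v => ?_
    rw [MonoidHom.comp_apply, toCox_gen]
    by_cases h : Γ.f v = 2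
    · simp only [genWord, h, if_true, CoxeterSystem.wordProd_singleton, toHol_simple]
      exact Γ.holGen_inl_of_f_eq_two h
    · simp only [genWord, h, if_false, CoxeterSystem.wordProd_cons, CoxeterSystem.wordProd_nil,
        mul_one, map_mul, toHol_simple]
      exact Γ.holGen_inl_mul_inr v
  exact DFunLike.congr_fun this g

/-! ### Comparison of word lengths -/

/-- The Coxeter letters `a_v`, `b_v` with `v ∈ X`. -/
def doubled (X : Set V) : Set (V ⊕ V) := {p | Sum.elim id id p ∈ X}

/-- Translating a word over `X` into Coxeter letters: each letter contributes exactly one `a`. -/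
theorem exists_coxWord (X : Set V) (w : List Γ.DyerGroup)
    (hw : ∀ a ∈ w, a ∈ Γ.gen '' X ∪ (Γ.gen '' X)⁻¹) :
    ∃ ω : List (V ⊕ V), (∀ p ∈ ω, p ∈ doubled X) ∧ ω.countP Sum.isLeft = w.length ∧
      Γ.coxSys.wordProd ω = Γ.toCox w.prod := by
  induction w with
  | nil => exact ⟨[], by simp⟩
  | cons a w ih =>
    obtain ⟨ω, h1, h2, h3⟩ := ih fun b hb => hw b (List.mem_cons_of_mem _ hb)
    have hmem : ∀ v ∈ X, ∀ p ∈ Γ.genWord v, p ∈ doubled X := by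
      intro v hv p
      unfold genWord
      split_ifs
      · simp only [List.mem_singleton]; rintro rfl; exact hv
      · simp only [List.mem_cons, List.not_mem_nil, or_false]
        rintro (rfl | rfl) <;> exact hv
    have hcount : ∀ v, (Γ.genWord v).countP Sum.isLeft = 1 := by
      intro v
      unfold genWord
      split_ifs <;> simp [List.countP_cons]
    suffices h : ∃ τ : List (V ⊕ V), (∀ p ∈ τ, p ∈ doubled X) ∧ τ.countP Sum.isLeft = 1 ∧
        Γ.coxSys.wordProd τ = Γ.toCox a by
      obtain ⟨τ, t1, t2, t3⟩ := h
      refine ⟨τ ++ ω, ?_, ?_, ?_⟩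
      · intro p hp
        exact (List.mem_append.mp hp).elim (t1 p) (h1 p)
      · rw [List.countP_append, t2, h2, List.length_cons, add_comm]
      · rw [CoxeterSystem.wordProd_append, t3, h3, List.prod_cons, map_mul]
    rcases hw a List.mem_cons_self with ⟨v, hv, rfl⟩ | ⟨v, hv, hva⟩
    · exact ⟨Γ.genWord v, hmem v hv, hcount v, (Γ.toCox_gen v).symm⟩
    · refine ⟨(Γ.genWord v).reverse, ?_, ?_, ?_⟩
      · intro p hp
        exact hmem v hv p (List.mem_reverse.mp hp)
      · rw [List.countP_reverse, hcount]
      · rw [CoxeterSystem.wordProd_reverse, ← toCox_gen, hva, map_inv, inv_inv]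

theorem invAt_mem (X : Set V) (v : V) {a : Γ.DyerGroup}
    (ha : a ∈ Γ.gen '' X ∪ (Γ.gen '' X)⁻¹) :
    Γ.invAt v a ∈ Γ.gen '' X ∪ (Γ.gen '' X)⁻¹ := by
  have key : ∀ x ∈ X, Γ.genInvAt v x ∈ Γ.gen '' X ∪ (Γ.gen '' X)⁻¹ := by
    intro x hx
    unfold genInvAt
    split_ifs
    · exact Or.inr ⟨x, hx, by simp⟩
    · exact Or.inl ⟨x, hx, rfl⟩
  rcases ha with ⟨x, hx, rfl⟩ | ⟨x, hx, hxa⟩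
  · rw [invAt_gen]; exact key x hx
  · have e : a = (Γ.gen x)⁻¹ := by rw [hxa, inv_inv]
    rw [e, map_inv, invAt_gen]
    rcases key x hx with h | h
    · exact Or.inr (by simpa using h)
    · exact Or.inl h

/-- Translating a Coxeter word back: `σ_v` permutes the letters over `X`, so the `D`-component is
a word over `X` with at most one letter for each `a`. The hypothesis only asks the letters to
agree with letters of `doubled X` as elements of the Coxeter group. -/
theorem exists_dyerWord (X : Set V) (ω : List (V ⊕ V))
    (hω : ∀ p ∈ ω, Γ.coxSys.simple p ∈ Γ.coxSys.simple '' doubled X) :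
    ∃ w : List Γ.DyerGroup, w.length ≤ ω.countP Sum.isLeft ∧
      (∀ a ∈ w, a ∈ Γ.gen '' X ∪ (Γ.gen '' X)⁻¹) ∧
      w.prod = (Γ.toHol (Γ.coxSys.wordProd ω)).left := by
  induction ω with
  | nil => exact ⟨[], by simp⟩
  | cons p ω ih =>
    obtain ⟨w, h1, h2, h3⟩ := ih fun q hq => hω q (List.mem_cons_of_mem _ hq)
    obtain ⟨v, hv⟩ : ∃ v, (Γ.holGen p).right = Γ.invAt v := by
      rcases p with v | v <;> exact ⟨v, rfl⟩
    have hprod : (Γ.toHol (Γ.coxSys.wordProd (p :: ω))).left =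
        (Γ.holGen p).left * (w.map (Γ.invAt v)).prod := by
      rw [CoxeterSystem.wordProd_cons, map_mul, toHol_simple, SemidirectProduct.mul_left, hv,
        ← h3, MonoidHom.id_apply, map_list_prod]
    have hmap : ∀ a ∈ w.map (Γ.invAt v), a ∈ Γ.gen '' X ∪ (Γ.gen '' X)⁻¹ := by
      intro a ha
      obtain ⟨b, hb, rfl⟩ := List.mem_map.mp ha
      exact Γ.invAt_mem X v (h2 b hb)
    by_cases h : (Γ.holGen p).left = 1
    · refine ⟨w.map (Γ.invAt v), ?_, hmap, by rw [hprod, h, one_mul]⟩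
      rw [List.length_map, List.countP_cons]
      omega
    · have hleft : p.isLeft = true := by
        rcases p with u | u
        · rfl
        · exact absurd rfl h
      have hmem : (Γ.holGen p).left ∈ Γ.gen '' X := by
        obtain ⟨q, hq, hqp⟩ := hω p List.mem_cons_self
        rw [← toHol_simple, ← hqp, toHol_simple] at h ⊢
        rcases q with u | u
        · exact ⟨u, hq, rfl⟩
        · exact absurd rfl h
      refine ⟨(Γ.holGen p).left :: w.map (Γ.invAt v), ?_, ?_, by rw [hprod, List.prod_cons]⟩
      · rw [List.length_cons, List.length_map, List.countP_cons, if_pos hleft]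
        omega
      · intro a ha
        rcases List.mem_cons.mp ha with rfl | ha
        · exact Or.inl hmem
        · exact hmap a ha

theorem exists_word_s4 (X : Set V) {g : Γ.DyerGroup} (hg : g ∈ Γ.parabolic X) :
    ∃ w : List Γ.DyerGroup, (∀ a ∈ w, a ∈ Γ.gen '' X ∪ (Γ.gen '' X)⁻¹) ∧ w.prod = g := by
  rw [parabolic, ← Subgroup.mem_toSubmonoid, Subgroup.closure_toSubmonoid] at hg
  exact Submonoid.exists_list_of_mem_closure hg

/-- A word over `V` representing an element of `D_X` can be replaced by a word over `X` which is
not longer. -/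
theorem exists_word_of_mem_parabolic (X : Set V) (w : List Γ.DyerGroup)
    (hw : ∀ a ∈ w, a ∈ Set.range Γ.gen ∪ (Set.range Γ.gen)⁻¹) (hg : w.prod ∈ Γ.parabolic X) :
    ∃ w' : List Γ.DyerGroup, w'.length ≤ w.length ∧
      (∀ a ∈ w', a ∈ Γ.gen '' X ∪ (Γ.gen '' X)⁻¹) ∧ w'.prod = w.prod := by
  rw [← Set.image_univ] at hw
  obtain ⟨ω, -, hcount, hprod⟩ := Γ.exists_coxWord Set.univ w hw
  obtain ⟨w₀, hw₀, hw₀prod⟩ := Γ.exists_word_s4 X hg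
  obtain ⟨u, hu, -, huprod⟩ := Γ.exists_coxWord X w₀ hw₀
  rw [hw₀prod] at huprod
  obtain ⟨ω', hsub, hred, hprod'⟩ := Γ.coxSys.exists_sublist_isReduced ω
  obtain ⟨w', h1, h2, h3⟩ := Γ.exists_dyerWord X ω' <|
    Γ.coxSys.simple_mem_of_isReduced (doubled X) ω' hred u hu (by rw [huprod, hprod', hprod])
  refine ⟨w', h1.trans (hcount ▸ hsub.countP_le), h2, ?_⟩
  rw [h3, hprod', hprod, toHol_toCox, SemidirectProduct.left_inl]

end DyerGraph

/-- For `g` in a standard parabolic subgroup `D_X` of a Dyer group,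
the word length of `g` with respect to `X` equals its word length with respect to `V`. -/
theorem wordLength_parabolic_eq
    {V : Type} [Fintype V] (Γ : DyerGraph V) (X : Set V) (g : Γ.DyerGroup)
    (hg : g ∈ Γ.parabolic X) :
    wordLength (Γ.gen '' X) g = wordLength (Set.range Γ.gen) g := by
  have hX : {n | ∃ w : List Γ.DyerGroup, w.length = n ∧
      (∀ a ∈ w, a ∈ Γ.gen '' X ∪ (Γ.gen '' X)⁻¹) ∧ w.prod = g}.Nonempty := by
    obtain ⟨w, hw, hwg⟩ := Γ.exists_word_s4 X hg
    exact ⟨_, w, rfl, hw, hwg⟩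
  have hsub : {n | ∃ w : List Γ.DyerGroup, w.length = n ∧
      (∀ a ∈ w, a ∈ Γ.gen '' X ∪ (Γ.gen '' X)⁻¹) ∧ w.prod = g} ⊆
      {n | ∃ w : List Γ.DyerGroup, w.length = n ∧
        (∀ a ∈ w, a ∈ Set.range Γ.gen ∪ (Set.range Γ.gen)⁻¹) ∧ w.prod = g} := by
    rintro n ⟨w, hn, hw, hwg⟩
    refine ⟨w, hn, fun a ha => ?_, hwg⟩
    exact (hw a ha).imp (fun h => Set.image_subset_range _ _ h)
      fun h => Set.image_subset_range _ _ h
  apply le_antisymm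
  · obtain ⟨w, hn, hw, hwg⟩ := Nat.sInf_mem (hX.mono hsub)
    obtain ⟨w', h1, h2, h3⟩ := Γ.exists_word_of_mem_parabolic X w hw (hwg.symm ▸ hg)
    calc wordLength (Γ.gen '' X) g ≤ w'.length := Nat.sInf_le ⟨w', rfl, h2, h3.trans hwg⟩
      _ ≤ w.length := h1
      _ = wordLength (Set.range Γ.gen) g := hn
  · exact Nat.sInf_le (hsub (Nat.sInf_mem hX))
end
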